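/- Let d ≥ 1 and m, m' ∈ ℝ^d. There exists a coupling (X,Y) of the Gaussian laws N(m, I_d) and N(m', I_d) such that P(X ≠ Y) ≤ min(‖m−m'‖₂/√(2π), 1). Equivalently, the total variation distance between N(m,I_d) and N(m',I_d) is at most ‖m−m'‖₂/√(2π). -/

import Mathlib

open MeasureTheory ProbabilityTheory

/-!
A coupling of `μ` and `ν` that keeps their common part on the diagonal charges the complement of
the diagonal with the mass by which `μ` exceeds `ν`, so it suffices to bound the total variation
distance of the two Gaussians. Total variation cannot increase under a map or under an independent
product with a fixed law. Coordinatewise affine maps therefore reduce the question to the standard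
Gaussian and its translate by a vector `u`; splitting off the component along `u` reduces it further
to dimension one. There the two densities compare oppositely on the two sides of the midpoint of the
means, and the excess mass is that of an interval of length `‖u‖` under a density bounded by
`1 / √(2π)`.
-/

open scoped ENNReal NNReal

section TotalVariation

variable {α β : Type*} {mα : MeasurableSpace α} {mβ : MeasurableSpace β} {μ ν : Measure α}

/-- The excess `sup (μ s - ν s)` of `μ` over `ν`, with truncated subtraction in `ℝ≥0∞`. For measures
of equal finite mass this is the total variation distance, the absolute value being superfluous
because `s` may be replaced by its complement. -/
noncomputable def tvDist (μ ν : Measure α) : ℝ≥0∞ :=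
  ⨆ (s : Set α) (_ : MeasurableSet s), μ s - ν s

lemma tvDist_le_iff {ε : ℝ≥0∞} :
    tvDist μ ν ≤ ε ↔ ∀ s, MeasurableSet s → μ s ≤ ν s + ε := by
  simp only [tvDist, iSup_le_iff, tsub_le_iff_left]

lemma measure_le_add_tvDist {s : Set α} (hs : MeasurableSet s) : μ s ≤ ν s + tvDist μ ν :=
  tvDist_le_iff.1 le_rfl s hs

lemma tvDist_self (μ : Measure α) : tvDist μ μ = 0 := by
  simp [tvDist]

lemma tvDist_comm [IsFiniteMeasure μ] [IsFiniteMeasure ν] (h : μ Set.univ = ν Set.univ) :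
    tvDist μ ν = tvDist ν μ := by
  suffices hle : ∀ (μ ν : Measure α) [IsFiniteMeasure μ], μ Set.univ = ν Set.univ →
      tvDist μ ν ≤ tvDist ν μ from (hle μ ν h).antisymm (hle ν μ h.symm)
  intro μ ν _ h
  refine tvDist_le_iff.2 fun s hs ↦ (ENNReal.add_le_add_iff_right (measure_ne_top μ sᶜ)).1 ?_
  calc μ s + μ sᶜ
      = ν s + ν sᶜ := by rw [measure_add_measure_compl hs, measure_add_measure_compl hs, h]
    _ ≤ ν s + (μ sᶜ + tvDist ν μ) := by gcongr; exact measure_le_add_tvDist hs.compl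
    _ = ν s + tvDist ν μ + μ sᶜ := by rw [add_assoc, add_comm (μ sᶜ)]

lemma tvDist_map_le {f : α → β} (hf : Measurable f) :
    tvDist (μ.map f) (ν.map f) ≤ tvDist μ ν := by
  refine tvDist_le_iff.2 fun s hs ↦ ?_
  rw [Measure.map_apply hf hs, Measure.map_apply hf hs]
  exact measure_le_add_tvDist (hf hs)

lemma tvDist_prod_right_le [SFinite μ] [SFinite ν] (ρ : Measure β) [IsProbabilityMeasure ρ] :
    tvDist (μ.prod ρ) (ν.prod ρ) ≤ tvDist μ ν := by
  refine tvDist_le_iff.2 fun s hs ↦ ?_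
  rw [Measure.prod_apply_symm hs, Measure.prod_apply_symm hs]
  calc ∫⁻ y, μ ((fun x ↦ (x, y)) ⁻¹' s) ∂ρ
      ≤ ∫⁻ y, (ν ((fun x ↦ (x, y)) ⁻¹' s) + tvDist μ ν) ∂ρ :=
        lintegral_mono fun y ↦ measure_le_add_tvDist (measurable_prodMk_right hs)
    _ = ∫⁻ y, ν ((fun x ↦ (x, y)) ⁻¹' s) ∂ρ + tvDist μ ν := by
        rw [lintegral_add_right _ measurable_const, lintegral_const, measure_univ, mul_one]

lemma tvDist_le_of_isHahnDecomposition [IsFiniteMeasure ν] {H : Set α}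
    (hH : IsHahnDecomposition ν μ H) : tvDist μ ν ≤ μ H - ν H := by
  refine tvDist_le_iff.2 fun s hs ↦ ?_
  have hsub_H : ν (H \ s) ≤ μ (H \ s) := by
    simpa [Measure.restrict_eq_self _ Set.sdiff_subset] using hH.le_on (H \ s)
  have hsub_compl : μ (s \ H) ≤ ν (s \ H) := by
    simpa [Measure.restrict_eq_self _ (Set.sdiff_subset_compl s H)] using hH.ge_on_compl (s \ H)
  have hexcess : μ (s ∩ H) ≤ ν (s ∩ H) + (μ H - ν H) := by
    refine (ENNReal.add_le_add_iff_right (measure_ne_top ν (H \ s))).1 ?_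
    calc μ (s ∩ H) + ν (H \ s)
        ≤ μ (H ∩ s) + μ (H \ s) := by rw [Set.inter_comm]; gcongr
      _ = μ H := measure_inter_add_sdiff H hs
      _ ≤ ν H + (μ H - ν H) := le_add_tsub
      _ = ν (s ∩ H) + (μ H - ν H) + ν (H \ s) := by
          rw [← measure_inter_add_sdiff (μ := ν) H hs, Set.inter_comm, add_right_comm]
  calc μ s = μ (s ∩ H) + μ (s \ H) := (measure_inter_add_sdiff s hH.measurableSet).symm
    _ ≤ ν (s ∩ H) + (μ H - ν H) + ν (s \ H) := add_le_add hexcess hsub_compl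
    _ = ν s + (μ H - ν H) := by
        rw [add_right_comm, measure_inter_add_sdiff s hH.measurableSet]

end TotalVariation

section Coupling

variable {α β : Type*} {mα : MeasurableSpace α} {mβ : MeasurableSpace β}

/-- `γ` is a coupling of `μ` and `ν`: a measure on the product with these marginals. -/
structure IsCoupling (γ : Measure (α × β)) (μ : Measure α) (ν : Measure β) : Prop where
  map_fst : γ.map Prod.fst = μ
  map_snd : γ.map Prod.snd = ν

namespace IsCoupling

variable {γ γ' : Measure (α × β)} {μ μ' : Measure α} {ν ν' : Measure β}

lemma measure_univ_eq (h : IsCoupling γ μ ν) : γ Set.univ = μ Set.univ := by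
  rw [← h.map_fst, Measure.map_apply measurable_fst .univ, Set.preimage_univ]

lemma isProbabilityMeasure [IsProbabilityMeasure μ] (h : IsCoupling γ μ ν) :
    IsProbabilityMeasure γ :=
  ⟨by rw [h.measure_univ_eq, measure_univ]⟩

lemma add (h : IsCoupling γ μ ν) (h' : IsCoupling γ' μ' ν') :
    IsCoupling (γ + γ') (μ + μ') (ν + ν') where
  map_fst := by rw [Measure.map_add _ _ measurable_fst, h.map_fst, h'.map_fst]
  map_snd := by rw [Measure.map_add _ _ measurable_snd, h.map_snd, h'.map_snd]

lemma map_diag (μ : Measure α) : IsCoupling (μ.map fun x ↦ (x, x)) μ μ where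
  map_fst := by
    rw [Measure.map_map measurable_fst (by fun_prop)]
    exact Measure.map_id
  map_snd := by
    rw [Measure.map_map measurable_snd (by fun_prop)]
    exact Measure.map_id

lemma inv_smul_prod [IsFiniteMeasure μ] [SFinite ν] (h : μ Set.univ = ν Set.univ) :
    IsCoupling ((μ Set.univ)⁻¹ • μ.prod ν) μ ν := by
  rcases eq_or_ne (μ Set.univ) 0 with h0 | h0
  · obtain rfl : μ = 0 := Measure.measure_univ_eq_zero.1 h0
    obtain rfl : ν = 0 := Measure.measure_univ_eq_zero.1 (h ▸ h0)
    constructor <;> simp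
  have hcancel : (μ Set.univ)⁻¹ * μ Set.univ = 1 :=
    ENNReal.inv_mul_cancel h0 (measure_ne_top μ _)
  constructor
  · rw [Measure.map_smul, Measure.map_fst_prod, ← h, smul_smul, hcancel, one_smul]
  · rw [Measure.map_smul, Measure.map_snd_prod, smul_smul, hcancel, one_smul]

end IsCoupling

variable [MeasurableEq α]

lemma exists_isCoupling_add_measure_ne_le (κ ξ η : Measure α) [IsFiniteMeasure ξ] [SFinite η]
    (h : ξ Set.univ = η Set.univ) :
    ∃ γ, IsCoupling γ (κ + ξ) (κ + η) ∧ γ {p | p.1 ≠ p.2} ≤ ξ Set.univ := by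
  have hξη := IsCoupling.inv_smul_prod h
  refine ⟨_, (IsCoupling.map_diag κ).add hξη, ?_⟩
  have hdiag : (κ.map fun x ↦ (x, x)) {p | p.1 ≠ p.2} = 0 := by
    have hne : MeasurableSet {p : α × α | p.1 ≠ p.2} := measurableSet_diagonal.compl
    rw [Measure.map_apply (by fun_prop) hne]
    simp
  rw [Measure.add_apply, hdiag, zero_add]
  exact (measure_mono (Set.subset_univ _)).trans_eq hξη.measure_univ_eq

theorem exists_isCoupling_measure_ne_le_tvDist (μ ν : Measure α) [IsFiniteMeasure μ]
    [IsFiniteMeasure ν] (h : μ Set.univ = ν Set.univ) :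
    ∃ γ, IsCoupling γ μ ν ∧ γ {p | p.1 ≠ p.2} ≤ tvDist μ ν := by
  obtain ⟨H, hH⟩ := exists_isHahnDecomposition ν μ
  set κ := ν.restrict H + μ.restrict Hᶜ
  set ξ := μ.restrict H - ν.restrict H
  set η := ν.restrict Hᶜ - μ.restrict Hᶜ
  have hμ : κ + ξ = μ := by
    rw [add_right_comm, add_comm (ν.restrict H), Measure.sub_add_cancel_of_le hH.le_on,
      Measure.restrict_add_restrict_compl hH.measurableSet]
  have hν : κ + η = ν := by
    rw [add_assoc, add_comm (μ.restrict Hᶜ), Measure.sub_add_cancel_of_le hH.ge_on_compl,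
      Measure.restrict_add_restrict_compl hH.measurableSet]
  have hmass : ξ Set.univ = η Set.univ := by
    refine (ENNReal.add_right_inj (measure_ne_top κ Set.univ)).1 ?_
    rw [← Measure.add_apply, ← Measure.add_apply, hμ, hν, h]
  obtain ⟨γ, hγ, hγ_ne⟩ := exists_isCoupling_add_measure_ne_le κ ξ η hmass
  rw [hμ, hν] at hγ
  refine ⟨γ, hγ, hγ_ne.trans ?_⟩
  rw [Measure.sub_apply .univ hH.le_on, Measure.restrict_apply_univ, Measure.restrict_apply_univ]
  exact tsub_le_iff_left.2 (measure_le_add_tvDist hH.measurableSet)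

end Coupling

section GaussianReal

variable {v : ℝ≥0}

lemma gaussianReal_le_mul_volume (a : ℝ) (hv : v ≠ 0) (s : Set ℝ) :
    gaussianReal a v s ≤ ENNReal.ofReal (√(2 * Real.pi * v))⁻¹ * volume s := by
  rw [gaussianReal_apply a hv, ← setLIntegral_const]
  refine lintegral_mono fun x ↦ ENNReal.ofReal_le_ofReal ?_
  refine mul_le_of_le_one_right (by positivity) (Real.exp_le_one_iff.2 ?_)
  exact div_nonpos_of_nonpos_of_nonneg (neg_nonpos.2 (sq_nonneg _)) (by positivity)

lemma gaussianPDF_le_gaussianPDF {a b x : ℝ} (h : |x - a| ≤ |x - b|) :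
    gaussianPDF b v x ≤ gaussianPDF a v x := by
  refine ENNReal.ofReal_le_ofReal ?_
  unfold gaussianPDFReal
  gcongr _ * Real.exp (-?_ / _)
  exact sq_le_sq.2 h

lemma isHahnDecomposition_gaussianReal {a b : ℝ} (hab : a ≤ b) (hv : v ≠ 0) :
    IsHahnDecomposition (gaussianReal b v) (gaussianReal a v) (Set.Iic ((a + b) / 2)) where
  measurableSet := measurableSet_Iic
  le_on := by
    rw [gaussianReal_of_var_ne_zero _ hv, gaussianReal_of_var_ne_zero _ hv,
      restrict_withDensity measurableSet_Iic, restrict_withDensity measurableSet_Iic]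
    refine withDensity_mono ((ae_restrict_mem measurableSet_Iic).mono fun x hx ↦ ?_)
    refine gaussianPDF_le_gaussianPDF (sq_le_sq.1 ?_)
    nlinarith [Set.mem_Iic.1 hx]
  ge_on_compl := by
    rw [gaussianReal_of_var_ne_zero _ hv, gaussianReal_of_var_ne_zero _ hv,
      restrict_withDensity measurableSet_Iic.compl, restrict_withDensity measurableSet_Iic.compl]
    refine withDensity_mono ((ae_restrict_mem measurableSet_Iic.compl).mono fun x hx ↦ ?_)
    have hx : (a + b) / 2 < x := not_le.1 hx
    refine gaussianPDF_le_gaussianPDF (sq_le_sq.1 ?_)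
    nlinarith

lemma gaussianReal_Iic_eq (a b c : ℝ) :
    gaussianReal b v (Set.Iic c) = gaussianReal a v (Set.Iic (c - (b - a))) := by
  have hshift : (gaussianReal a v).map (· + (b - a)) = gaussianReal b v := by
    rw [gaussianReal_map_add_const, add_sub_cancel]
  rw [← hshift, Measure.map_apply (by fun_prop) measurableSet_Iic, Set.preimage_add_const_Iic]

theorem tvDist_gaussianReal_le (a b : ℝ) (hv : v ≠ 0) :
    tvDist (gaussianReal a v) (gaussianReal b v) ≤
      ENNReal.ofReal (|a - b| / √(2 * Real.pi * v)) := by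
  wlog hab : a ≤ b generalizing a b
  · rw [tvDist_comm (by simp only [measure_univ]), abs_sub_comm]
    exact this b a (le_of_not_ge hab)
  set c := (a + b) / 2
  calc tvDist (gaussianReal a v) (gaussianReal b v)
      ≤ gaussianReal a v (Set.Iic c) - gaussianReal b v (Set.Iic c) :=
        tvDist_le_of_isHahnDecomposition (isHahnDecomposition_gaussianReal hab hv)
    _ = gaussianReal a v (Set.Iic c) - gaussianReal a v (Set.Iic (c - (b - a))) := by
        rw [gaussianReal_Iic_eq a b]
    _ ≤ gaussianReal a v (Set.Iic c \ Set.Iic (c - (b - a))) := le_measure_sdiff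
    _ ≤ ENNReal.ofReal (√(2 * Real.pi * v))⁻¹ * volume (Set.Ioc (c - (b - a)) c) := by
        rw [Set.Iic_sdiff_Iic]
        exact gaussianReal_le_mul_volume a hv _
    _ = ENNReal.ofReal (|a - b| / √(2 * Real.pi * v)) := by
        rw [Real.volume_Ioc, ← ENNReal.ofReal_mul (by positivity), abs_sub_comm,
          abs_of_nonneg (sub_nonneg.2 hab), sub_sub_cancel, inv_mul_eq_div]

end GaussianReal

section StdGaussian

variable {E : Type*} [NormedAddCommGroup E] [InnerProductSpace ℝ E] [FiniteDimensional ℝ E]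
  [MeasurableSpace E] [BorelSpace E]

open scoped RealInnerProductSpace

lemma charFun_stdGaussian_sub_inner_smul {e : E} (he : ‖e‖ = 1) (t : E) :
    charFun (stdGaussian E) (t - ⟪e, t⟫ • e) =
      charFun (stdGaussian E) t * Complex.exp (⟪e, t⟫ ^ 2 / 2) := by
  have hpythagoras : ‖t - ⟪e, t⟫ • e‖ ^ 2 = ‖t‖ ^ 2 - ⟪e, t⟫ ^ 2 := by
    rw [norm_sub_sq_real, norm_smul, he, real_inner_smul_right, real_inner_comm, Real.norm_eq_abs,
      mul_one, sq_abs]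
    ring
  rw [charFun_stdGaussian, charFun_stdGaussian, ← Complex.exp_add, ← Complex.ofReal_pow,
    hpythagoras]
  push_cast
  ring_nf

lemma map_smul_add_sub_inner_smul_prod_stdGaussian {e : E} (he : ‖e‖ = 1) (a : ℝ) :
    ((gaussianReal a 1).prod (stdGaussian E)).map
        (fun p ↦ p.1 • e + (p.2 - ⟪e, p.2⟫ • e)) =
      (stdGaussian E).map (· + a • e) := by
  have hmeas : Measurable fun p : ℝ × E ↦ p.1 • e + (p.2 - ⟪e, p.2⟫ • e) := by fun_prop
  have := Measure.isProbabilityMeasure_map (μ := (gaussianReal a 1).prod (stdGaussian E))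
    hmeas.aemeasurable
  have := Measure.isProbabilityMeasure_map (μ := stdGaussian E) (f := (· + a • e)) (by fun_prop)
  refine Measure.ext_of_charFun (funext fun t ↦ ?_)
  have hsplit (p : ℝ × E) :
      Complex.exp (⟪p.1 • e + (p.2 - ⟪e, p.2⟫ • e), t⟫ * Complex.I) =
        Complex.exp (⟪e, t⟫ * p.1 * Complex.I) *
          Complex.exp (⟪p.2, t - ⟪e, t⟫ • e⟫ * Complex.I) := by
    rw [← Complex.exp_add, ← add_mul, ← Complex.ofReal_mul, ← Complex.ofReal_add]
    congr 3
    simp only [inner_add_left, inner_sub_left, inner_sub_right, real_inner_smul_left,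
      real_inner_smul_right, real_inner_comm e p.2]
    ring
  rw [charFun_apply, integral_map hmeas.aemeasurable (by fun_prop)]
  simp_rw [hsplit]
  rw [integral_prod_mul (fun x : ℝ ↦ Complex.exp (⟪e, t⟫ * x * Complex.I))
      (fun y : E ↦ Complex.exp (⟪y, t - ⟪e, t⟫ • e⟫ * Complex.I)),
    ← charFun_apply_real, ← charFun_apply, charFun_gaussianReal,
    charFun_stdGaussian_sub_inner_smul he, charFun_map_add_const, mul_left_comm, ← Complex.exp_add,
    real_inner_smul_left]
  congr 2
  push_cast
  ring

theorem tvDist_stdGaussian_map_add_le (u : E) :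
    tvDist (stdGaussian E) ((stdGaussian E).map (· + u)) ≤
      ENNReal.ofReal (‖u‖ / √(2 * Real.pi)) := by
  rcases eq_or_ne u 0 with rfl | hu
  · simp [tvDist_self]
  obtain ⟨e, he, hue⟩ : ∃ e : E, ‖e‖ = 1 ∧ ‖u‖ • e = u :=
    ⟨‖u‖⁻¹ • u, norm_smul_inv_norm hu, smul_inv_smul₀ (norm_ne_zero_iff.2 hu) u⟩
  let resample : ℝ × E → E := fun p ↦ p.1 • e + (p.2 - ⟪e, p.2⟫ • e)
  have hlaw : ((gaussianReal 0 1).prod (stdGaussian E)).map resample = stdGaussian E := by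
    simpa using map_smul_add_sub_inner_smul_prod_stdGaussian he 0
  have hlaw_add : ((gaussianReal ‖u‖ 1).prod (stdGaussian E)).map resample =
      (stdGaussian E).map (· + u) := by
    simpa only [hue] using map_smul_add_sub_inner_smul_prod_stdGaussian he ‖u‖
  calc tvDist (stdGaussian E) ((stdGaussian E).map (· + u))
      = tvDist (((gaussianReal 0 1).prod (stdGaussian E)).map resample)
          (((gaussianReal ‖u‖ 1).prod (stdGaussian E)).map resample) := by rw [hlaw, hlaw_add]
    _ ≤ tvDist ((gaussianReal 0 1).prod (stdGaussian E))
          ((gaussianReal ‖u‖ 1).prod (stdGaussian E)) := tvDist_map_le (by fun_prop)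
    _ ≤ tvDist (gaussianReal 0 1) (gaussianReal ‖u‖ 1) := tvDist_prod_right_le _
    _ ≤ ENNReal.ofReal (‖u‖ / √(2 * Real.pi)) := by
        simpa using tvDist_gaussianReal_le 0 ‖u‖ one_ne_zero

end StdGaussian

section Pi

variable {ι : Type*} [Fintype ι]

lemma map_affine_stdGaussian (m : ι → ℝ) (v : ι → ℝ≥0) :
    (stdGaussian (EuclideanSpace ℝ ι)).map (fun x i ↦ √(v i) * x i + m i) =
      Measure.pi fun i ↦ gaussianReal (m i) (v i) := by
  have hlaw (i : ι) :
      MeasurePreserving (fun x ↦ √(v i) * x + m i) (gaussianReal 0 1)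
        (gaussianReal (m i) (v i)) := by
    refine ⟨by fun_prop, ?_⟩
    rw [← Function.comp_def (· + m i) (√(v i) * ·),
      ← Measure.map_map (by fun_prop) (by fun_prop), gaussianReal_map_const_mul,
      gaussianReal_map_add_const]
    congr 1
    · simp
    · ext; simp
  rw [← map_pi_eq_stdGaussian, Measure.map_map (by fun_prop) (by fun_prop)]
  exact (measurePreserving_pi _ _ hlaw).map_eq

theorem tvDist_pi_gaussianReal_le (m m' : ι → ℝ) {v : ι → ℝ≥0} (hv : ∀ i, v i ≠ 0) :
    tvDist (Measure.pi fun i ↦ gaussianReal (m i) (v i))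
        (Measure.pi fun i ↦ gaussianReal (m' i) (v i)) ≤
      ENNReal.ofReal (√(∑ i, (m i - m' i) ^ 2 / v i) / √(2 * Real.pi)) := by
  let u : EuclideanSpace ℝ ι := WithLp.toLp 2 fun i ↦ (m' i - m i) / √(v i)
  have hnorm : ‖u‖ = √(∑ i, (m i - m' i) ^ 2 / v i) := by
    simp [u, EuclideanSpace.norm_eq, div_pow, sub_sq_comm]
  have hmap : ((stdGaussian (EuclideanSpace ℝ ι)).map (· + u)).map
      (fun x i ↦ √(v i) * x i + m i) = Measure.pi fun i ↦ gaussianReal (m' i) (v i) := by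
    rw [Measure.map_map (by fun_prop) (by fun_prop), ← map_affine_stdGaussian]
    congr 1
    ext x i
    have : √(v i : ℝ) ≠ 0 := by simpa using hv i
    simp only [u, Function.comp_apply, PiLp.add_apply]
    field_simp
    ring
  rw [← hnorm, ← hmap, ← map_affine_stdGaussian]
  exact (tvDist_map_le (by fun_prop)).trans (tvDist_stdGaussian_map_add_le u)

end Pi

theorem stmt_7_general {ι : Type*} [Fintype ι] (m m' : ι → ℝ) {v : ι → ℝ≥0} (hv : ∀ i, v i ≠ 0) :
    ∃ γ : Measure ((ι → ℝ) × (ι → ℝ)),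
      IsCoupling γ (Measure.pi fun i ↦ gaussianReal (m i) (v i))
        (Measure.pi fun i ↦ gaussianReal (m' i) (v i)) ∧
      (γ {p | p.1 ≠ p.2}).toReal
        ≤ min (√(∑ i, (m i - m' i) ^ 2 / v i) / √(2 * Real.pi)) 1 := by
  obtain ⟨γ, hγ, hγ_ne⟩ := exists_isCoupling_measure_ne_le_tvDist
    (Measure.pi fun i ↦ gaussianReal (m i) (v i))
    (Measure.pi fun i ↦ gaussianReal (m' i) (v i)) (by simp only [measure_univ])
  have := hγ.isProbabilityMeasure
  refine ⟨γ, hγ, le_min ?_ measureReal_le_one⟩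
  exact ENNReal.toReal_le_of_le_ofReal (by positivity)
    (hγ_ne.trans (tvDist_pi_gaussianReal_le m m' hv))

/-- Let `d ≥ 1` and `m, m' ∈ ℝ^d`. There exists a coupling `(X,Y)` of the Gaussian laws
`N(m, I_d)` and `N(m', I_d)` such that
`P(X ≠ Y) ≤ min (‖m − m'‖₂ / √(2π)) 1`; equivalently, the total variation distance
between `N(m, I_d)` and `N(m', I_d)` is at most `‖m − m'‖₂/√(2π)`. -/
theorem stmt_7 (d : ℕ) (hd : 1 ≤ d) (m m' : Fin d → ℝ) :
    ∃ μ : Measure ((Fin d → ℝ) × (Fin d → ℝ)), IsProbabilityMeasure μ ∧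
      μ.map Prod.fst = Measure.pi (fun i => gaussianReal (m i) 1) ∧
      μ.map Prod.snd = Measure.pi (fun i => gaussianReal (m' i) 1) ∧
      (μ {p | p.1 ≠ p.2}).toReal
        ≤ min (Real.sqrt (∑ i, (m i - m' i) ^ 2) / Real.sqrt (2 * Real.pi)) 1 := by
  obtain ⟨γ, hγ, hγ_ne⟩ := stmt_7_general m m' (v := fun _ ↦ 1) fun _ ↦ one_ne_zero
  exact ⟨γ, hγ.isProbabilityMeasure, hγ.map_fst, hγ.map_snd, by simpa using hγ_ne⟩
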